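/- Let G be a finitely presented group with a finite presentation ⟨X | R⟩ whose Dehn function satisfies δ_G(m) > 0 for all m ∈ ℕ. Then the isoperimetric spectrum of G with respect to X satisfies δ_G(n)/δ_G(m) ≼ f_{G,X}(k,m,n) ≼ δ_G(n)/m, where the left- and right-hand sides are regarded as elements of 𝓕 that do not depend on the first argument k. In particular, f_{G,X}(k,m,n) is equivalent to a function that depends on m and n only. -/

import Mathlib

open Function

namespace IsoSpecPaper

variable {ι : Type*} {G : Type*} [Group G]

/-- The (reduced) length of an element of a free group. -/
noncomputable def wnorm (w : FreeGroup ι) : ℕ :=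
  @FreeGroup.norm ι (Classical.decEq ι) w

/-- `triv φ k` : the set of words of length at most `k` in the generators
(and their inverses) representing the identity of `G` under the marking `φ`. -/
noncomputable def triv (φ : FreeGroup ι →* G) (k : ℕ) : Set (FreeGroup ι) :=
  {w | wnorm w ≤ k ∧ φ w = 1}

/-- `AreaLe R w l` : `w` is a product of `l` conjugates of elements of `R` or
their inverses in the free group. -/
def AreaLe (R : Set (FreeGroup ι)) (w : FreeGroup ι) (l : ℕ) : Prop :=
  ∃ L : List (FreeGroup ι × FreeGroup ι), L.length = l ∧
    (∀ p ∈ L, p.2 ∈ R ∨ p.2⁻¹ ∈ R) ∧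
    w = (L.map fun p => p.1⁻¹ * p.2 * p.1).prod

/-- The area of `w` with respect to the set of relators `R`. -/
noncomputable def area (R : Set (FreeGroup ι)) (w : FreeGroup ι) : ℕ :=
  sInf {l | AreaLe R w l}

/-- The isoperimetric spectrum of the marked group `(G, φ)`:
`isoSpec φ k m n = max { area_{S_m}(w) : w ∈ ⟪S_k⟫, ‖w‖ ≤ n }`. -/
noncomputable def isoSpec (φ : FreeGroup ι →* G) (k m n : ℕ) : ℕ :=
  sSup (area (triv φ m) '' {w | w ∈ Subgroup.normalClosure (triv φ k) ∧ wnorm w ≤ n})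

/-- The real-valued isoperimetric spectrum. -/
noncomputable def isoSpecR (φ : FreeGroup ι →* G) : ℕ → ℕ → ℕ → ℝ :=
  fun k m n => (isoSpec φ k m n : ℝ)

/-- The Dehn function of the presentation with relators `R`. -/
noncomputable def dehn (R : Set (FreeGroup ι)) (n : ℕ) : ℕ :=
  sSup (area R '' {w | w ∈ Subgroup.normalClosure R ∧ wnorm w ≤ n})

/-- The quasi-order `f ≼ g` on functions of triples `(k,m,n)` of positive integers
with `m ≥ k`. -/
def SpecLE (f g : ℕ → ℕ → ℕ → ℝ) : Prop :=
  ∃ C : ℕ, 0 < C ∧ ∀ k m n : ℕ, 0 < k → 0 < m → 0 < n → C * k ≤ m →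
    f k (C * m) n ≤ C * g (C * k) m (C * n) + C * (n : ℝ) / m + C

/-- Equivalence of isoperimetric functions: `f ∼ g`. -/
def SpecEquiv (f g : ℕ → ℕ → ℕ → ℝ) : Prop := SpecLE f g ∧ SpecLE g f

/-- The linear spectrum `(k,m,n) ↦ n/m`. -/
noncomputable def linSpec : ℕ → ℕ → ℕ → ℝ := fun _ m n => (n : ℝ) / m

/-- The word length of `g ∈ G` with respect to the marking `φ`. -/
noncomputable def wlen (φ : FreeGroup ι →* G) (g : G) : ℕ :=
  sInf {n | ∃ w : FreeGroup ι, wnorm w = n ∧ φ w = g}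

/-- The word metric on `G` with respect to the marking `φ`. -/
noncomputable def wdist (φ : FreeGroup ι →* G) (g h : G) : ℕ := wlen φ (g⁻¹ * h)

/-- Quasi-isometry of marked groups with respect to their word metrics. -/
noncomputable def QuasiIsometric {H : Type*} [Group H] {κ : Type*}
    (φ : FreeGroup ι →* G) (ψ : FreeGroup κ →* H) : Prop :=
  ∃ L : ℝ, 0 ≤ L ∧ ∃ (α : G → H) (β : H → G),
    (∀ x y : G, (wdist ψ (α x) (α y) : ℝ) ≤ L * wdist φ x y + L) ∧
    (∀ u v : H, (wdist φ (β u) (β v) : ℝ) ≤ L * wdist ψ u v + L) ∧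
    (∀ t : H, (wdist ψ (α (β t)) t : ℝ) ≤ L) ∧
    (∀ s : G, (wdist φ (β (α s)) s : ℝ) ≤ L)

/-- A (combinatorial) geodesic path of length `n` in the Cayley graph of `(G, φ)`:
consecutive vertices are at distance at most `1` and the endpoints are at
distance exactly `n`. -/
noncomputable def IsGeodesic (φ : FreeGroup ι →* G) {n : ℕ} (p : Fin (n + 1) → G) : Prop :=
  (∀ i : Fin n, wdist φ (p i.castSucc) (p i.succ) ≤ 1) ∧
  wdist φ (p 0) (p (Fin.last n)) = n

/-- Every vertex of the path `p` lies within distance `δ` of the set `A`. -/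
noncomputable def ThinAt (φ : FreeGroup ι →* G) (δ : ℝ) {n : ℕ}
    (p : Fin (n + 1) → G) (A : Set G) : Prop :=
  ∀ i, ∃ a ∈ A, (wdist φ (p i) a : ℝ) ≤ δ

/-- The Cayley graph of `(G, φ)` is `δ`-hyperbolic: every geodesic triangle is `δ`-thin. -/
noncomputable def HypConst (φ : FreeGroup ι →* G) (δ : ℝ) : Prop :=
  ∀ (n₁ n₂ n₃ : ℕ) (p : Fin (n₁ + 1) → G) (q : Fin (n₂ + 1) → G) (r : Fin (n₃ + 1) → G),
    IsGeodesic φ p → IsGeodesic φ q → IsGeodesic φ r →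
    p (Fin.last n₁) = q 0 → q (Fin.last n₂) = r 0 → r (Fin.last n₃) = p 0 →
    ThinAt φ δ p (Set.range q ∪ Set.range r) ∧
    ThinAt φ δ q (Set.range r ∪ Set.range p) ∧
    ThinAt φ δ r (Set.range p ∪ Set.range q)

/-- The marked group `(G, φ)` is hyperbolic. -/
noncomputable def IsHyperbolic (φ : FreeGroup ι →* G) : Prop :=
  ∃ δ : ℝ, 0 ≤ δ ∧ HypConst φ δ

/-- `G` (marked by `φ`) is a limit (direct limit) of hyperbolic groups. -/
noncomputable def LimitOfHyperbolic (φ : FreeGroup ι →* G) : Prop :=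
  Surjective φ ∧ ∃ R : ℕ → Set (FreeGroup ι),
    (∀ i j, i ≤ j → R i ⊆ R j) ∧
    φ.ker = Subgroup.normalClosure (⋃ i, R i) ∧
    ∀ i, IsHyperbolic (QuotientGroup.mk' (Subgroup.normalClosure (R i)))

/-- `G` (marked by `φ`) is well-approximated by hyperbolic groups. -/
noncomputable def WellApproximated (φ : FreeGroup ι →* G) : Prop :=
  Surjective φ ∧ ∃ R : ℕ → Set (FreeGroup ι),
    (∀ i j, i ≤ j → R i ⊆ R j) ∧
    φ.ker = Subgroup.normalClosure (⋃ i, R i) ∧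
    (∀ i, IsHyperbolic (QuotientGroup.mk' (Subgroup.normalClosure (R i)))) ∧
    ∃ C : ℕ, 0 < C ∧ ∀ i : ℕ, 0 < i →
      (∀ w : FreeGroup ι, wnorm w ≤ i → φ w = 1 →
        w ∈ Subgroup.normalClosure (R i)) ∧
      HypConst (QuotientGroup.mk' (Subgroup.normalClosure (R i))) ((C * i : ℕ) : ℝ)

/-- Planar (non-crossing) fillings of unreduced words: `Dg Rs l A` says that the list `l`
bounds a filling with `A` relators from `Rs`. -/
inductive Dg (Rs : Set (List (ι × Bool))) : List (ι × Bool) → ℕ → Prop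
  | nil : Dg Rs [] 0
  | br (x : ι) (b : Bool) (u v : List (ι × Bool)) (a c : ℕ) :
      Dg Rs u a → Dg Rs v c → Dg Rs ((x, b) :: (u ++ (x, !b) :: v)) (a + c)
  | rel (r v : List (ι × Bool)) (a : ℕ) : r ∈ Rs → Dg Rs (r ++ v) a → Dg Rs v (a + 1)

theorem Dg.insert {Rs : Set (List (ι × Bool))} {u l : List (ι × Bool)} {a c : ℕ}
    (hu : Dg Rs u a) (hl : Dg Rs l c) :
    ∀ p q, l = p ++ q → Dg Rs (p ++ (u ++ q)) (a + c) := by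
  have prod : ∀ {u v : List (ι × Bool)} {a c : ℕ}, Dg Rs u a → Dg Rs v c →
      Dg Rs (u ++ v) (a + c) := by
    intro u v a c hu hv
    induction hu with
    | nil => simpa using hv
    | br x b u1 v1 a1 c1 h1 h2 ih1 ih2 =>
      have := Dg.br x b _ _ _ _ h1 ih2
      simpa [add_assoc] using this
    | rel r v1 a1 hr h ih =>
      have := Dg.rel r _ _ hr (by simpa using ih)
      rw [add_right_comm] 
      exact this
  induction hl with
  | nil =>
    intro p q h
    obtain ⟨rfl, rfl⟩ := List.append_eq_nil_iff.1 h.symm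
    simpa using hu
  | br x b u1 v1 a1 c1 h1 h2 ih1 ih2 =>
    intro p q h
    rcases p with _ | ⟨y, p⟩
    · simp only [List.nil_append] at h ⊢
      rw [← h]
      exact prod hu (Dg.br _ _ _ _ _ _ h1 h2)
    · simp only [List.cons_append, List.cons.injEq] at h
      obtain ⟨rfl, h⟩ := h
      rcases List.append_eq_append_iff.1 h with ⟨d, rfl, h'⟩ | ⟨d, rfl, h'⟩
      · rcases d with _ | ⟨y, d⟩
        · simp only [List.nil_append] at h'
          subst h'
          have := Dg.br x b _ _ _ _ (ih1 u1 [] (by simp)) h2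
          simpa [add_assoc] using this
        · simp only [List.cons_append, List.cons.injEq] at h'
          obtain ⟨rfl, h'⟩ := h'
          have := Dg.br x b _ _ _ _ h1 (ih2 d q h')
          simpa [add_assoc, add_left_comm] using this
      · subst h'
        have := Dg.br x b _ _ _ _ (ih1 p d rfl) h2
        simpa [add_assoc] using this
  | rel r v1 a1 hr h ih =>
    intro p q hpq
    have := ih (r ++ p) q (by simp [hpq])
    exact Dg.rel r _ _ hr (by simpa using this)

theorem Dg.pair {Rs : Set (List (ι × Bool))} (x : ι) (b : Bool) :
    Dg Rs [(x, b), (x, !b)] 0 := by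
  simpa using Dg.br x b [] [] 0 0 Dg.nil Dg.nil

theorem Dg.middle {Rs : Set (List (ι × Bool))}
    (hRs : ∀ p q, p ++ q ∈ Rs → q ++ p ∈ Rs) (B : ℕ)
    (hrot : ∀ l a, a ≤ B → Dg Rs l a → ∀ p q, l = p ++ q → Dg Rs (q ++ p) a)
    {l : List (ι × Bool)} {a : ℕ} (hl : Dg Rs l a) :
    a ≤ B → ∀ p r q, r ∈ Rs → l = p ++ (r ++ q) → Dg Rs (p ++ q) (a + 1) := by
  induction hl with
  | nil =>
    intro _ p r q hr h
    have h1 := List.append_eq_nil_iff.1 h.symm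
    have h2 := List.append_eq_nil_iff.1 h1.2
    obtain ⟨rfl, -⟩ := h1
    obtain ⟨rfl, rfl⟩ := h2
    exact Dg.rel [] _ _ hr Dg.nil
  | br x b u v a c h1 h2 ih1 ih2 =>
    intro hB p r q hr h
    rcases p with _ | ⟨y, p⟩
    · simp only [List.nil_append] at h ⊢
      refine Dg.rel r _ _ hr ?_
      rw [← h]
      exact Dg.br _ _ _ _ _ _ h1 h2
    · -- the main case: the relator contains the closing letter
      have key : ∀ s t, u = p ++ s → r = s ++ (x, !b) :: t → v = t ++ q →
          Dg Rs ((x, b) :: p ++ q) (a + c + 1) := by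
        intro s t hu hrr hv
        have e1 := hrot _ _ (by omega) h1 p s hu
        have e2 := Dg.insert e1 h2 t q hv
        have e3 := Dg.insert (Dg.pair x (!b)) e2 (t ++ s) (p ++ q) (by simp)
        refine Dg.rel (t ++ (s ++ [(x, !b)])) _ _ (hRs _ _ ?_) ?_
        · rw [hrr] at hr; simpa using hr
        · simpa using e3
      simp only [List.cons_append, List.cons.injEq] at h
      obtain ⟨rfl, h⟩ := h
      rcases List.append_eq_append_iff.1 h with ⟨d, rfl, h'⟩ | ⟨d, rfl, h'⟩
      · rcases d with _ | ⟨y, d⟩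
        · simp only [List.nil_append] at h'
          rcases r with _ | ⟨z, r⟩
          · refine Dg.rel [] _ _ hr ?_
            simp only [List.nil_append] at h'
            subst h'
            simpa using Dg.br _ _ _ _ _ _ h1 h2
          · simp only [List.cons_append, List.cons.injEq] at h'
            obtain ⟨rfl, h'⟩ := h'
            exact key [] r (by simp) (by simp) h'
        · simp only [List.cons_append, List.cons.injEq] at h'
          obtain ⟨rfl, h'⟩ := h'
          have := Dg.br x b _ _ _ _ h1 (ih2 (by omega) d r q hr h')
          simpa [add_assoc] using this
      · rcases List.append_eq_append_iff.1 h' with ⟨e, rfl, h''⟩ | ⟨e, rfl, h''⟩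
        · subst h''
          have := Dg.br x b _ _ _ _ (ih1 (by omega) p r e hr rfl) h2
          simpa [add_assoc, add_comm 1] using this
        · rcases e with _ | ⟨y, e⟩
          · simp only [List.nil_append] at h''
            subst h''
            have := Dg.br x b _ _ _ _ (ih1 (by omega) p d [] (by simpa using hr) (by simp)) h2
            simpa [add_assoc, add_comm 1] using this
          · simp only [List.cons_append, List.cons.injEq] at h''
            obtain ⟨rfl, h''⟩ := h''
            exact key d e rfl rfl h''
  | rel s v a hs h ih =>
    intro hB p r q hr hpq
    have := ih (by omega) (s ++ p) r q hr (by simp [hpq])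
    exact Dg.rel s _ _ hs (by simpa using this)

theorem Dg.rotate_aux {Rs : Set (List (ι × Bool))}
    (hRs : ∀ p q, p ++ q ∈ Rs → q ++ p ∈ Rs) (B : ℕ) :
    ∀ l a, a ≤ B → Dg Rs l a → ∀ p q, l = p ++ q → Dg Rs (q ++ p) a := by
  induction B with
  | zero => ?_
  | succ B IH => ?_
  all_goals
    intro l a haB hl
    induction hl with
    | nil =>
      intro p q h
      obtain ⟨rfl, rfl⟩ := List.append_eq_nil_iff.1 h.symm
      exact Dg.nil
    | br x b u v a c h1 h2 ih1 ih2 =>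
      intro p q h
      rcases p with _ | ⟨y, p⟩
      · simp only [List.nil_append] at h
        rw [← h]
        simpa using Dg.br _ _ _ _ _ _ h1 h2
      · simp only [List.cons_append, List.cons.injEq] at h
        obtain ⟨rfl, h⟩ := h
        have key : ∀ s, u = p ++ s → q = s ++ (x, !b) :: v →
            Dg Rs (q ++ (x, b) :: p) (a + c) := by
          intro s hu hq
          have e1 := ih1 (by omega) p s hu
          have e2 := Dg.br x (!b) _ _ _ _ h2 Dg.nil
          have e3 := Dg.insert e2 e1 s p rfl
          subst hq
          simpa [add_comm] using e3
        rcases List.append_eq_append_iff.1 h with ⟨d, rfl, h'⟩ | ⟨d, rfl, h'⟩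
        · rcases d with _ | ⟨y, d⟩
          · simp only [List.nil_append] at h'
            subst h'
            exact key [] (by simp) (by simp)
          · simp only [List.cons_append, List.cons.injEq] at h'
            obtain ⟨rfl, h'⟩ := h'
            have e1 := ih2 (by omega) d q h'
            have e2 := Dg.br x b _ _ _ _ h1 Dg.nil
            have e3 := Dg.insert e2 e1 q d rfl
            simpa using e3
        · exact key d rfl h'
    | rel r v a hr h ih =>
      intro p q hpq
      first
      | (exfalso; omega)
      | (have e1 := ih (by omega) (r ++ p) q (by simp [hpq])
         exact Dg.middle hRs B IH e1 (by omega) q r p hr rfl)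

theorem Dg.rotate {Rs : Set (List (ι × Bool))}
    (hRs : ∀ p q, p ++ q ∈ Rs → q ++ p ∈ Rs) {p q : List (ι × Bool)} {a : ℕ}
    (h : Dg Rs (p ++ q) a) : Dg Rs (q ++ p) a :=
  Dg.rotate_aux hRs a _ a le_rfl h p q rfl

/-- Folding: cancelling pairs may be deleted. -/
theorem Dg.fold {Rs : Set (List (ι × Bool))}
    (hRs : ∀ p q, p ++ q ∈ Rs → q ++ p ∈ Rs) {l : List (ι × Bool)} {a : ℕ}
    (hl : Dg Rs l a) :
    ∀ p x b q, l = p ++ (x, b) :: (x, !b) :: q → Dg Rs (p ++ q) a := by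
  induction hl with
  | nil => intro p x b q h; simp at h
  | br y c u v a1 c1 h1 h2 ih1 ih2 =>
    intro p x b q h
    rcases p with _ | ⟨z, p⟩
    · simp only [List.nil_append, List.cons.injEq, Prod.mk.injEq] at h
      obtain ⟨⟨rfl, rfl⟩, h⟩ := h
      rcases u with _ | ⟨z, u⟩
      · simp only [List.nil_append, List.cons.injEq] at h
        obtain ⟨_, rfl⟩ := h
        have := Dg.insert h1 h2 [] v rfl
        simpa using this
      · simp only [List.cons_append, List.cons.injEq] at h
        obtain ⟨rfl, rfl⟩ := h
        have e1 := Dg.rotate hRs (p := [(y, !c)]) (q := u) (by simpa using h1)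
        have := Dg.insert e1 h2 [] v rfl
        simpa using this
    · simp only [List.cons_append, List.cons.injEq] at h
      obtain ⟨rfl, h⟩ := h
      rcases List.append_eq_append_iff.1 h with ⟨d, rfl, h'⟩ | ⟨d, rfl, h'⟩
      · rcases d with _ | ⟨z, d⟩
        · simp only [List.nil_append, List.cons.injEq, Prod.mk.injEq] at h'
          obtain ⟨⟨rfl, rfl⟩, rfl⟩ := h'
          have := Dg.insert h1 h2 [(y, c)] q (by simp)
          simpa using this
        · simp only [List.cons_append, List.cons.injEq] at h'
          obtain ⟨rfl, h'⟩ := h'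
          have := Dg.br y c _ _ _ _ h1 (ih2 d x b q h')
          simpa using this
      · rcases d with _ | ⟨z, d⟩
        · simp only [List.nil_append, List.cons.injEq, Prod.mk.injEq] at h'
          obtain ⟨⟨rfl, rfl⟩, rfl⟩ := h'
          have := Dg.insert h1 h2 [(x, c)] q (by simp)
          simpa using this
        · simp only [List.cons_append, List.cons.injEq] at h'
          obtain ⟨rfl, h'⟩ := h'
          rcases d with _ | ⟨z, d⟩
          · simp only [List.nil_append, List.cons.injEq, Prod.mk.injEq] at h'
            obtain ⟨⟨rfl, hc⟩, rfl⟩ := h'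
            have hb : b = c := by simpa using hc
            subst hb
            have e1 := Dg.rotate hRs (p := p) (q := [(x, b)]) (by simpa using h1)
            have := Dg.insert e1 h2 [] _ rfl
            simpa using this
          · simp only [List.cons_append, List.cons.injEq] at h'
            obtain ⟨rfl, rfl⟩ := h'
            have := Dg.br y c _ _ _ _ (ih1 p x b d rfl) h2
            simpa using this
  | rel r v a1 hr h ih =>
    intro p x b q hpq
    have := ih (r ++ p) x b q (by simp [hpq])
    exact Dg.rel r _ _ hr (by simpa using this)

theorem Dg.red {Rs : Set (List (ι × Bool))}
    (hRs : ∀ p q, p ++ q ∈ Rs → q ++ p ∈ Rs) {l l' : List (ι × Bool)} {a : ℕ}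
    (h : FreeGroup.Red l l') (hl : Dg Rs l a) : Dg Rs l' a := by
  induction h with
  | refl => exact hl
  | tail _ h ih =>
    cases h with
    | not => exact Dg.fold hRs ih _ _ _ _ rfl

/-- Words conjugate to fillable words are fillable. -/
theorem Dg.conj {Rs : Set (List (ι × Bool))} {r : List (ι × Bool)} {a : ℕ} (h : Dg Rs r a)
    (f : List (ι × Bool)) : Dg Rs (f ++ (r ++ FreeGroup.invRev f)) a := by
  induction f with
  | nil => simpa [FreeGroup.invRev] using h
  | cons y f ih =>
    have := Dg.br y.1 y.2 _ _ _ _ ih Dg.nil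
    simpa [FreeGroup.invRev] using this

/-- Relators used: all words of length at most `M` that are trivial in `G`. -/
def relWords (φ : FreeGroup ι →* G) (M : ℕ) : Set (List (ι × Bool)) :=
  {l | l.length ≤ M ∧ φ (FreeGroup.mk l) = 1}

theorem relWords_rot (φ : FreeGroup ι →* G) (M : ℕ) (p q : List (ι × Bool))
    (h : p ++ q ∈ relWords φ M) : q ++ p ∈ relWords φ M := by
  obtain ⟨h1, h2⟩ := h
  refine ⟨by simpa [add_comm] using h1, ?_⟩
  rw [← FreeGroup.mul_mk, map_mul] at h2 ⊢
  exact mul_eq_one_comm.1 h2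

theorem Dg.of_relWord (φ : FreeGroup ι →* G) (M : ℕ) {r : List (ι × Bool)}
    (h : r ∈ relWords φ M) : Dg (relWords φ M) r 1 := by
  refine Dg.rel (FreeGroup.invRev r) r 0 ⟨by simpa using h.1, ?_⟩ ?_
  · rw [← FreeGroup.inv_mk, map_inv, h.2, inv_one]
  · have := Dg.conj (Rs := relWords φ M) Dg.nil (FreeGroup.invRev r)
    simpa using this

theorem Dg.of_prod (φ : FreeGroup ι →* G) (M : ℕ) (L : List (FreeGroup ι × FreeGroup ι))
    (hL : ∀ p ∈ L, wnorm p.2 ≤ M ∧ φ p.2 = 1) :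
    ∃ l, FreeGroup.mk l = (L.map fun p => p.1⁻¹ * p.2 * p.1).prod ∧
      Dg (relWords φ M) l L.length := by
  classical
  induction L with
  | nil => exact ⟨[], by simp [FreeGroup.one_eq_mk], Dg.nil⟩
  | cons p L ih =>
    obtain ⟨l, h1, h2⟩ := ih fun p hp => hL p (List.mem_cons_of_mem _ hp)
    obtain ⟨hn, hp⟩ := hL p List.mem_cons_self
    letI := Classical.decEq ι
    have e : Dg (relWords φ M) p.2.toWord 1 :=
      Dg.of_relWord φ M ⟨hn, by rw [FreeGroup.mk_toWord]; exact hp⟩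
    have e1 := Dg.conj e (FreeGroup.invRev p.1.toWord)
    refine ⟨_, ?_, by simpa [add_comm] using Dg.insert e1 h2 [] l rfl⟩
    simp only [List.map_cons, List.prod_cons, List.nil_append, ← FreeGroup.mul_mk,
      ← FreeGroup.inv_mk, FreeGroup.mk_toWord, h1]
    group

theorem Dg.tokens (φ : FreeGroup ι →* G) (M : ℕ) (hM : 1 ≤ M) {l : List (ι × Bool)} {A : ℕ}
    (h : Dg (relWords φ M) l A) :
    ∃ T : List (FreeGroup ι × FreeGroup ι), T.length ≤ (M + 1) * A + l.length ∧
      (∀ t ∈ T, φ t.1 = φ t.2 ∧ wnorm t.1 ≤ M ∧ wnorm t.2 ≤ 1) ∧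
      (T.map Prod.fst).prod = FreeGroup.mk l ∧ (T.map Prod.snd).prod = 1 := by
  letI := Classical.decEq ι
  induction h with
  | nil => exact ⟨[], by simp, by simp, by simp [FreeGroup.one_eq_mk], by simp⟩
  | br x b u v a c h1 h2 ih1 ih2 =>
    obtain ⟨T1, p1, p2, p3, p4⟩ := ih1
    obtain ⟨T2, q1, q2, q3, q4⟩ := ih2
    have one : ∀ b, wnorm (FreeGroup.mk [(x, b)]) ≤ 1 := fun b => FreeGroup.norm_mk_le
    refine ⟨(FreeGroup.mk [(x, b)], FreeGroup.mk [(x, b)]) :: (T1 ++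
      (FreeGroup.mk [(x, !b)], FreeGroup.mk [(x, !b)]) :: T2), ?_, ?_, ?_, ?_⟩
    · simp only [List.length_cons, List.length_append]
      nlinarith
    · intro t ht
      simp only [List.mem_cons, List.mem_append] at ht
      rcases ht with rfl | ht | rfl | ht
      · exact ⟨rfl, (one b).trans hM, one b⟩
      · exact p2 t ht
      · exact ⟨rfl, (one _).trans hM, one _⟩
      · exact q2 t ht
    · simp [p3, q3]
    · simp only [List.map_cons, List.map_append, List.prod_cons, List.prod_append, p4, q4]
      have : FreeGroup.mk [(x, !b)] = (FreeGroup.mk [(x, b)])⁻¹ := by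
        simp [FreeGroup.inv_mk, FreeGroup.invRev]
      rw [this]; group
  | rel r v a hr h ih =>
    obtain ⟨T, p1, p2, p3, p4⟩ := ih
    refine ⟨((FreeGroup.mk r)⁻¹, 1) :: T, ?_, ?_, ?_, ?_⟩
    · have := hr.1
      simp only [List.length_cons, List.length_append] at p1 ⊢
      nlinarith
    · intro t ht
      rcases List.mem_cons.1 ht with rfl | ht
      · refine ⟨by rw [map_inv, hr.2, inv_one, map_one], ?_, by simp [wnorm]⟩
        exact (FreeGroup.norm_inv_eq (x := FreeGroup.mk r)).le.trans
          (FreeGroup.norm_mk_le.trans hr.1)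
      · exact p2 t ht
    · simp only [List.map_cons, List.prod_cons, p3, ← FreeGroup.mul_mk]; group
    · simpa using p4

theorem wnorm_mul_le (u v : FreeGroup ι) : wnorm (u * v) ≤ wnorm u + wnorm v :=
  @FreeGroup.norm_mul_le ι (Classical.decEq ι) _ _

theorem wnorm_inv (u : FreeGroup ι) : wnorm u⁻¹ = wnorm u :=
  @FreeGroup.norm_inv_eq ι (Classical.decEq ι) _

theorem wnorm_prod_le (L : List (FreeGroup ι)) (M : ℕ) (h : ∀ t ∈ L, wnorm t ≤ M) :
    wnorm L.prod ≤ M * L.length := by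
  induction L with
  | nil => simp [wnorm]
  | cons x L ih =>
    have h1 := h x List.mem_cons_self
    have h2 := ih fun t ht => h t (List.mem_cons_of_mem _ ht)
    have h3 := wnorm_mul_le x L.prod
    simp only [List.prod_cons, List.length_cons]
    nlinarith

theorem AreaLe.mul {R : Set (FreeGroup ι)} {u v : FreeGroup ι} {a b : ℕ}
    (hu : AreaLe R u a) (hv : AreaLe R v b) : AreaLe R (u * v) (a + b) := by
  obtain ⟨L, rfl, h1, rfl⟩ := hu
  obtain ⟨L', rfl, h1', rfl⟩ := hv
  refine ⟨L ++ L', by simp, ?_, by simp⟩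
  intro p hp
  rcases List.mem_append.1 hp with hp | hp
  · exact h1 p hp
  · exact h1' p hp

theorem AreaLe.conj {R : Set (FreeGroup ι)} {u : FreeGroup ι} {a : ℕ}
    (hu : AreaLe R u a) (f : FreeGroup ι) : AreaLe R (f⁻¹ * u * f) a := by
  obtain ⟨L, rfl, h1, rfl⟩ := hu
  refine ⟨L.map fun p => (p.1 * f, p.2), by simp, ?_, ?_⟩
  · intro p hp
    obtain ⟨q, hq, rfl⟩ := List.mem_map.1 hp
    exact h1 q hq
  · clear h1
    induction L with
    | nil => simp
    | cons p L ih =>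
      simp only [List.map_cons, List.prod_cons] at ih ⊢
      rw [← ih]; group

theorem AreaLe.inv {R : Set (FreeGroup ι)} {u : FreeGroup ι} {a : ℕ}
    (hu : AreaLe R u a) : AreaLe R u⁻¹ a := by
  obtain ⟨L, rfl, h1, rfl⟩ := hu
  induction L with
  | nil => exact ⟨[], by simp⟩
  | cons p L ih =>
    have e1 := ih fun q hq => h1 q (List.mem_cons_of_mem _ hq)
    have e2 : AreaLe R (p.1⁻¹ * p.2⁻¹ * p.1) 1 :=
      ⟨[(p.1, p.2⁻¹)], rfl, by simpa using (h1 p List.mem_cons_self).symm, by simp⟩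
    have e3 := e1.mul e2
    simpa [mul_assoc] using e3

theorem AreaLe.one {R : Set (FreeGroup ι)} : AreaLe R 1 0 := ⟨[], by simp⟩

theorem AreaLe.of_mem {R : Set (FreeGroup ι)} {u : FreeGroup ι} (h : u ∈ R) : AreaLe R u 1 :=
  ⟨[(1, u)], by simp [h]⟩

theorem exists_areaLe {R : Set (FreeGroup ι)} {w : FreeGroup ι}
    (h : w ∈ Subgroup.normalClosure R) : ∃ l, AreaLe R w l := by
  refine Subgroup.closure_induction (p := fun w _ => ∃ l, AreaLe R w l) ?_ ⟨0, AreaLe.one⟩ ?_ ?_ h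
  · intro x hx
    obtain ⟨r, hr, hc⟩ := Group.mem_conjugatesOfSet_iff.1 hx
    obtain ⟨c, rfl⟩ := isConj_iff.1 hc
    exact ⟨1, by simpa using (AreaLe.of_mem hr).conj c⁻¹⟩
  · rintro x y _ _ ⟨a, ha⟩ ⟨b, hb⟩
    exact ⟨_, ha.mul hb⟩
  · rintro x _ ⟨a, ha⟩
    exact ⟨_, ha.inv⟩

theorem areaLe_area {R : Set (FreeGroup ι)} {w : FreeGroup ι}
    (h : w ∈ Subgroup.normalClosure R) : AreaLe R w (area R w) :=
  Nat.sInf_mem (exists_areaLe h)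

theorem area_le {R : Set (FreeGroup ι)} {w : FreeGroup ι} {l : ℕ} (h : AreaLe R w l) :
    area R w ≤ l := Nat.sInf_le h

/-- Cutting a token sequence into blocks of size `m`. -/
theorem chop (φ : FreeGroup ι →* G) (M m : ℕ) (hm : 0 < m) (N : ℕ) :
    ∀ T : List (FreeGroup ι × FreeGroup ι), T.length ≤ N →
      (∀ t ∈ T, φ t.1 = φ t.2 ∧ wnorm t.1 ≤ M ∧ wnorm t.2 ≤ 1) →
      ∃ q, q * m ≤ T.length + m ∧
        AreaLe (triv φ ((M + 1) * m)) ((T.map Prod.fst).prod * ((T.map Prod.snd).prod)⁻¹) q := by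
  have small : ∀ T : List (FreeGroup ι × FreeGroup ι), T.length ≤ m →
      (∀ t ∈ T, φ t.1 = φ t.2 ∧ wnorm t.1 ≤ M ∧ wnorm t.2 ≤ 1) →
      AreaLe (triv φ ((M + 1) * m)) ((T.map Prod.fst).prod * ((T.map Prod.snd).prod)⁻¹) 1 := by
    intro T hT h
    refine AreaLe.of_mem ⟨?_, ?_⟩
    · have h1 := wnorm_prod_le (T.map Prod.fst) M (by
        intro t ht; obtain ⟨s, hs, rfl⟩ := List.mem_map.1 ht; exact (h s hs).2.1)
      have h2 := wnorm_prod_le (T.map Prod.snd) 1 (by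
        intro t ht; obtain ⟨s, hs, rfl⟩ := List.mem_map.1 ht; exact (h s hs).2.2)
      have h3 := wnorm_mul_le (T.map Prod.fst).prod ((T.map Prod.snd).prod)⁻¹
      rw [wnorm_inv] at h3
      simp only [List.length_map] at h1 h2
      nlinarith
    · have : φ (T.map Prod.fst).prod = φ (T.map Prod.snd).prod := by
        rw [map_list_prod, map_list_prod, List.map_map, List.map_map]
        congr 1
        exact List.map_congr_left fun t ht => (h t ht).1
      rw [map_mul, map_inv, this, mul_inv_cancel]
  induction N using Nat.strong_induction_on with
  | _ N ih =>
    intro T hT h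
    by_cases hs : T.length ≤ m
    · exact ⟨1, by omega, small T hs h⟩
    · push Not at hs
      have hd : (T.drop m).length = T.length - m := by simp
      obtain ⟨q, hq, hq2⟩ := ih (T.drop m).length (by omega) (T.drop m) le_rfl
        fun t ht => h t (List.mem_of_mem_drop ht)
      have e1 := small (T.take m) (by simp) fun t ht => h t (List.mem_of_mem_take ht)
      have e2 := (hq2.conj ((T.take m).map Prod.fst).prod⁻¹).mul e1
      refine ⟨q + 1, by rw [add_mul]; omega, ?_⟩
      have hsplit : T = T.take m ++ T.drop m := (List.take_append_drop m T).symm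
      have f1 : (T.map Prod.fst).prod =
          ((T.take m).map Prod.fst).prod * ((T.drop m).map Prod.fst).prod := by
        conv_lhs => rw [hsplit]
        rw [List.map_append, List.prod_append]
      have f2 : (T.map Prod.snd).prod =
          ((T.take m).map Prod.snd).prod * ((T.drop m).map Prod.snd).prod := by
        conv_lhs => rw [hsplit]
        rw [List.map_append, List.prod_append]
      rw [f1, f2]
      convert e2 using 1
      group

/-- Main geometric estimate. -/
theorem area_triv_le (φ : FreeGroup ι →* G) (R : Set (FreeGroup ι)) (M m n : ℕ) (hM : 1 ≤ M)
    (hm : 0 < m) (hR : ∀ r ∈ R, wnorm r ≤ M ∧ φ r = 1) (w : FreeGroup ι)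
    (hw : w ∈ Subgroup.normalClosure R) (hn : wnorm w ≤ n) :
    area (triv φ ((M + 1) * m)) w * m ≤ (M + 1) * area R w + n + m := by
  obtain ⟨L, hL, h1, h2⟩ := areaLe_area hw
  obtain ⟨l, e1, e2⟩ := Dg.of_prod φ M L (by
    intro p hp
    rcases h1 p hp with h | h
    · exact hR _ h
    · have := hR _ h
      rw [wnorm_inv, map_inv, inv_eq_one] at this
      exact this)
  letI := Classical.decEq ι
  have e3 : Dg (relWords φ M) w.toWord L.length := by
    refine Dg.red (relWords_rot φ M) ?_ e2
    rw [h2, ← e1, FreeGroup.toWord_mk]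
    exact FreeGroup.reduce.red
  obtain ⟨T, t1, t2, t3, t4⟩ := e3.tokens φ M hM
  obtain ⟨q, q1, q2⟩ := chop φ M m hm _ T le_rfl t2
  rw [t3, t4, FreeGroup.mk_toWord, inv_one, mul_one] at q2
  have h3 := area_le q2
  have h4 : w.toWord.length ≤ n := hn
  rw [hL] at t1
  calc _ ≤ q * m := Nat.mul_le_mul_right _ h3
    _ ≤ _ := by omega

theorem finite_ball {a : ℕ} (n : ℕ) : {w : FreeGroup (Fin a) | wnorm w ≤ n}.Finite := by
  letI := Classical.decEq (Fin a)
  refine Set.Finite.of_finite_image (f := FreeGroup.toWord)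
    ((List.finite_length_le (Fin a × Bool) n).subset ?_) FreeGroup.toWord_injective.injOn
  rintro _ ⟨w, hw, rfl⟩
  exact hw

theorem le_sup {a : ℕ} (R S : Set (FreeGroup (Fin a))) (n : ℕ) (w : FreeGroup (Fin a))
    (h : w ∈ Subgroup.normalClosure R) (hn : wnorm w ≤ n) :
    area S w ≤ sSup (area S '' {w | w ∈ Subgroup.normalClosure R ∧ wnorm w ≤ n}) :=
  le_csSup (((finite_ball n).subset fun _ h => h.2).image _).bddAbove ⟨w, ⟨h, hn⟩, rfl⟩

theorem sup_le' {a : ℕ} (R S : Set (FreeGroup (Fin a))) (n B : ℕ)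
    (h : ∀ w, w ∈ Subgroup.normalClosure R → wnorm w ≤ n → area S w ≤ B) :
    sSup (area S '' {w | w ∈ Subgroup.normalClosure R ∧ wnorm w ≤ n}) ≤ B := by
  refine csSup_le ⟨_, 1, ⟨one_mem _, by simp [wnorm]⟩, rfl⟩ ?_
  rintro _ ⟨w, hw, rfl⟩
  exact h w hw.1 hw.2

theorem area_anti {R S : Set (FreeGroup ι)} (h : R ⊆ S) {w : FreeGroup ι}
    (hw : w ∈ Subgroup.normalClosure R) : area S w ≤ area R w := by
  obtain ⟨L, h1, h2, h3⟩ := areaLe_area hw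
  exact area_le ⟨L, h1, fun p hp => (h2 p hp).imp (fun x => h x) (fun x => h x), h3⟩

theorem triv_mono (φ : FreeGroup ι →* G) {k m : ℕ} (h : k ≤ m) : triv φ k ⊆ triv φ m :=
  fun _ hw => ⟨hw.1.trans h, hw.2⟩

theorem area_subst {R S : Set (FreeGroup ι)} (d : ℕ)
    (h : ∀ s ∈ S, ∃ e ≤ d, AreaLe R s e) {w : FreeGroup ι} {l : ℕ} (hw : AreaLe S w l) :
    ∃ e ≤ l * d, AreaLe R w e := by
  obtain ⟨L, rfl, h1, rfl⟩ := hw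
  induction L with
  | nil => exact ⟨0, by simp, by simpa using AreaLe.one⟩
  | cons p L ih =>
    obtain ⟨e, he, he2⟩ := ih fun q hq => h1 q (List.mem_cons_of_mem _ hq)
    have : ∃ e ≤ d, AreaLe R p.2 e := by
      rcases h1 p List.mem_cons_self with hp | hp
      · exact h _ hp
      · obtain ⟨e, he, he2⟩ := h _ hp
        exact ⟨e, he, by simpa using he2.inv⟩
    obtain ⟨e', he', he2'⟩ := this
    refine ⟨e' + e, ?_, by simpa using (he2'.conj p.1).mul he2⟩
    simp only [List.length_cons]
    nlinarith

/-- For a finitely presented group `G = ⟨X | R⟩` whose Dehn function is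
positive, the isoperimetric spectrum satisfies
`δ_G(n)/δ_G(m) ≼ f_{G,X}(k,m,n) ≼ δ_G(n)/m`; in particular it is equivalent to a
function depending on `m` and `n` only. -/
theorem isoSpec_of_finitelyPresented {G : Type} [Group G] {a : ℕ}
    (φ : FreeGroup (Fin a) →* G) (hφ : Surjective φ)
    (R : Set (FreeGroup (Fin a))) (hR : R.Finite)
    (hker : φ.ker = Subgroup.normalClosure R)
    (hpos : ∀ m : ℕ, 0 < m → 0 < dehn R m) :
    SpecLE (fun _ m n => (dehn R n : ℝ) / (dehn R m : ℝ)) (isoSpecR φ) ∧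
    SpecLE (isoSpecR φ) (fun _ m n => (dehn R n : ℝ) / (m : ℝ)) ∧
    ∃ g : ℕ → ℕ → ℝ, SpecEquiv (isoSpecR φ) (fun _ m n => g m n) := by
  have hRbd : ∃ M : ℕ, 1 ≤ M ∧ ∀ r ∈ R, wnorm r ≤ M := by
    obtain ⟨B, hB⟩ := (hR.image wnorm).bddAbove
    exact ⟨B + 1, by omega, fun r hr => (hB ⟨r, hr, rfl⟩).trans (by omega)⟩
  obtain ⟨M, hM, hRM⟩ := hRbd
  have hRφ : ∀ r ∈ R, φ r = 1 := fun r hr => by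
    have : r ∈ φ.ker := hker ▸ Subgroup.subset_normalClosure hr
    exact this
  have hsub : ∀ k, Subgroup.normalClosure (triv φ k) ≤ Subgroup.normalClosure R := by
    intro k
    rw [← hker]
    exact Subgroup.normalClosure_le_normal fun w hw => hw.2
  have hsup : ∀ k, M ≤ k → Subgroup.normalClosure R ≤ Subgroup.normalClosure (triv φ k) := by
    intro k hk
    exact Subgroup.normalClosure_mono fun r hr => ⟨(hRM r hr).trans hk, hRφ r hr⟩
  have hdmono : ∀ m n, m ≤ n → dehn R m ≤ dehn R n := by
    intro m n hmn
    exact sup_le' _ _ _ _ fun w hw hn => le_sup _ _ _ _ hw (hn.trans hmn)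
  refine ⟨⟨M, hM, ?_⟩, ⟨M + 1, by omega, ?_⟩, fun m n => isoSpecR φ m m n,
    ⟨M, hM, ?_⟩, ⟨M, hM, ?_⟩⟩
  · intro k m n hk hm hn hkm
    have hMk : M ≤ M * k := Nat.le_mul_of_pos_right _ hk
    have key : dehn R n ≤ isoSpec φ (M * k) m (M * n) * dehn R m := by
      refine sup_le' _ _ _ _ fun w hw hwn => ?_
      have hwm := hsup m (hMk.trans hkm) hw
      obtain ⟨e, he, he2⟩ := area_subst (R := R) (dehn R m) (by
        intro s hs
        have hs' : s ∈ Subgroup.normalClosure R := hsub m (Subgroup.subset_normalClosure hs)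
        exact ⟨_, le_sup _ _ _ _ hs' hs.1, areaLe_area hs'⟩) (areaLe_area hwm)
      refine (area_le he2).trans (he.trans (Nat.mul_le_mul_right _ ?_))
      exact le_sup _ _ _ _ (hsup _ hMk hw) (hwn.trans (Nat.le_mul_of_pos_left _ hM))
    have h1 : dehn R m ≤ dehn R (M * m) := hdmono _ _ (Nat.le_mul_of_pos_left _ hM)
    have h2 : (0 : ℝ) < dehn R (M * m) := by exact_mod_cast hpos _ (Nat.mul_pos hM hm)
    have h3 : (dehn R n : ℝ) / dehn R (M * m) ≤ isoSpec φ (M * k) m (M * n) := by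
      rw [div_le_iff₀ h2]
      exact_mod_cast key.trans (Nat.mul_le_mul_left _ h1)
    have h4 : (1 : ℝ) ≤ M := by exact_mod_cast hM
    have h5 : (0 : ℝ) ≤ (M : ℝ) * n / m := by positivity
    have h6 : (0 : ℝ) ≤ isoSpec φ (M * k) m (M * n) := by positivity
    simp only [isoSpecR]
    nlinarith
  · intro k m n hk hm hn hkm
    have hm' : (0 : ℝ) < m := by exact_mod_cast hm
    have key : isoSpec φ k ((M + 1) * m) n ≤
        ((M + 1) * dehn R ((M + 1) * n) + n + m) / m := by
      refine sup_le' _ _ _ _ fun w hw hwn => ?_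
      rw [Nat.le_div_iff_mul_le hm]
      have h1 := area_triv_le φ R M m n hM hm (fun r hr => ⟨hRM r hr, hRφ r hr⟩) w
        (hsub _ hw) hwn
      have h2 : area R w ≤ dehn R ((M + 1) * n) :=
        le_sup _ _ _ _ (hsub _ hw) (hwn.trans (Nat.le_mul_of_pos_left _ (by omega)))
      have h3 := Nat.mul_le_mul_left (M + 1) h2
      omega
    rw [Nat.le_div_iff_mul_le hm] at key
    have key' : (isoSpec φ k ((M + 1) * m) n : ℝ) * m ≤
        (M + 1) * dehn R ((M + 1) * n) + n + m := by exact_mod_cast key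
    rw [← le_div_iff₀ hm'] at key'
    refine key'.trans ?_
    have h0 : (0 : ℝ) ≤ M := by positivity
    have e : (((M + 1 : ℕ) : ℝ) * ((dehn R ((M + 1) * n) : ℝ) / (m : ℝ)) +
        ((M + 1 : ℕ) : ℝ) * (n : ℝ) / m + ((M + 1 : ℕ) : ℝ)) =
        ((M + 1) * dehn R ((M + 1) * n) + (M + 1) * n + (M + 1) * m) / m := by
      push_cast; field_simp
    rw [e]
    gcongr
    · have : (0 : ℝ) ≤ n := by positivity
      nlinarith
    · nlinarith
  · intro k m n hk hm hn hkm
    have hMk : M ≤ M * k := Nat.le_mul_of_pos_right _ hk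
    have hmM : m ≤ M * m := Nat.le_mul_of_pos_left _ hM
    have key : isoSpec φ k (M * m) n ≤ isoSpec φ m m (M * n) := by
      refine sup_le' _ _ _ _ fun w hw hwn => ?_
      have hwm := hsup m (hMk.trans hkm) (hsub _ hw)
      exact (area_anti (triv_mono φ hmM) hwm).trans
        (le_sup _ _ _ _ hwm (hwn.trans (Nat.le_mul_of_pos_left _ hM)))
    have key' : (isoSpec φ k (M * m) n : ℝ) ≤ isoSpec φ m m (M * n) := by exact_mod_cast key
    have h4 : (1 : ℝ) ≤ M := by exact_mod_cast hM
    have h5 : (0 : ℝ) ≤ (M : ℝ) * n / m := by positivity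
    have h6 : (0 : ℝ) ≤ isoSpec φ m m (M * n) := by positivity
    simp only [isoSpecR]
    nlinarith
  · intro k m n hk hm hn hkm
    have hMk : M ≤ M * k := Nat.le_mul_of_pos_right _ hk
    have hmM : m ≤ M * m := Nat.le_mul_of_pos_left _ hM
    have key : isoSpec φ (M * m) (M * m) n ≤ isoSpec φ (M * k) m (M * n) := by
      refine sup_le' _ _ _ _ fun w hw hwn => ?_
      have hwm := hsup m (hMk.trans hkm) (hsub _ hw)
      exact (area_anti (triv_mono φ hmM) hwm).trans
        (le_sup _ _ _ _ (hsup _ hMk (hsub _ hw)) (hwn.trans (Nat.le_mul_of_pos_left _ hM)))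
    have key' : (isoSpec φ (M * m) (M * m) n : ℝ) ≤ isoSpec φ (M * k) m (M * n) := by
      exact_mod_cast key
    have h4 : (1 : ℝ) ≤ M := by exact_mod_cast hM
    have h5 : (0 : ℝ) ≤ (M : ℝ) * n / m := by positivity
    have h6 : (0 : ℝ) ≤ isoSpec φ (M * k) m (M * n) := by positivity
    simp only [isoSpecR]
    nlinarith

end IsoSpecPaper
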